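/- arXiv:2203.04418 — 3 statements merged into one kernel-verified Lean document; each statement's English description precedes it below -/
import Mathlib

section
/- Let X be a finite set with |X| = n ≥ 2. Then the diameter of the set L(X) of linear orders on X with respect to the top-difference semimetric D equals 2(2^n − n − 1); that is, D(≿,⊵) ≤ 2(2^n − n − 1) for all linear orders ≿, ⊵ on X, and this bound is attained by some pair of linear orders. -/
open Classical Finset symmDiff

section PrefDefs

variable {X : Type*}

/-- The asymmetric part `R^>` of a binary relation `R`. -/
def asymPart (R : X → X → Prop) : X → X → Prop := fun x y => R x y ∧ ¬ R y x

/-- `R` is acyclic: there is no cycle of pairwise distinct elements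
`z_0 R^> z_1 R^> ⋯ R^> z_k R^> z_0`. -/
def AcyclicRel (R : X → X → Prop) : Prop :=
  ¬ ∃ (k : ℕ) (z : Fin (k + 1) → X), Function.Injective z ∧
      ∀ i : Fin (k + 1), asymPart R (z i) (z (i + 1))

/-- An acyclic order: a reflexive acyclic binary relation. -/
def AcyclicOrd (R : X → X → Prop) : Prop := Reflexive R ∧ AcyclicRel R

/-- `M(S,R)`: the set of `R`-maximal elements of `S`. -/
noncomputable def MaxSet [DecidableEq X] (S : Finset X) (R : X → X → Prop) : Finset X :=
  S.filter fun x => ∀ y ∈ S, ¬ asymPart R y x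

/-- The μ-top-difference semimetric, where the measure μ is given by the
weights `w x = μ {x}`. -/
noncomputable def Dmu [Fintype X] [DecidableEq X] (w : X → ℝ) (R R' : X → X → Prop) : ℝ :=
  ∑ S : Finset X, ∑ x ∈ symmDiff (MaxSet S R) (MaxSet S R'), w x

/-- The top-difference semimetric `D`. -/
noncomputable def Dtop [Fintype X] [DecidableEq X] (R R' : X → X → Prop) : ℕ :=
  ∑ S : Finset X, (symmDiff (MaxSet S R) (MaxSet S R')).card

/-- `≿ ⊕ (a,b)`: if `b ∼ a` delete `(b,a)`, if `a, b` are `≿`-incomparable add `(a,b)`. -/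
def oplusR (R : X → X → Prop) (a b : X) : X → X → Prop :=
  fun x y => (R x y ∧ ¬(R b a ∧ x = b ∧ y = a)) ∨ (¬ R b a ∧ x = a ∧ y = b)

/-- `≿ ⊖ (a,b)`: delete the pair `(a,b)`. -/
def ominusR (R : X → X → Prop) (a b : X) : X → X → Prop :=
  fun x y => R x y ∧ ¬(x = a ∧ y = b)

/-- `≿ → ≿_0 ↠ ⊵` : `R0` is a one-step perturbation of `R` toward `R'`. -/
def OneStep (R R0 R' : X → X → Prop) : Prop :=
  AcyclicOrd R0 ∧
  ((∃ a b, asymPart R a b ∧ ¬ asymPart R' a b ∧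
      (∀ x, asymPart R' x b → asymPart R x b) ∧ R0 = ominusR R a b) ∨
   (∃ a b, ¬ asymPart R a b ∧ ¬ asymPart R b a ∧ asymPart R' a b ∧ R0 = oplusR R a b))

/-- `Q` is in-between `R` and `R'` : `Q` is an n-step perturbation of `R` toward `R'`
for some positive integer n. -/
def InBetween (R R' Q : X → X → Prop) : Prop :=
  ∃ (n : ℕ) (c : Fin (n + 1) → (X → X → Prop)),
    OneStep R (c 0) R' ∧
    (∀ i : Fin n, OneStep (c i.castSucc) (c i.succ) R') ∧
    c (Fin.last n) = Q

/-- `N(b,≿)`: the number of `x ≠ b` with not `x ≻ b`. -/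
noncomputable def Nnum [Fintype X] (R : X → X → Prop) (b : X) : ℕ :=
  (Finset.univ.filter fun x => x ≠ b ∧ ¬ asymPart R x b).card

/-- `≿_{ab}`: the partial order whose asymmetric part is `(X \ {a,b}) × {a,b}`. -/
def RabRel (a b : X) : X → X → Prop :=
  fun x y => x = y ∨ ((x ≠ a ∧ x ≠ b) ∧ (y = a ∨ y = b))

/-- `≿_{ab}^+`: as `≿_{ab}` but with `a` ranked strictly above `b`. -/
def RabPlusRel (a b : X) : X → X → Prop :=
  fun x y => RabRel a b x y ∨ (x = a ∧ y = b)

/-- `d` is a semimetric on the set of acyclic orders on `X`. -/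
def IsSemimetricOn (d : (X → X → Prop) → (X → X → Prop) → ℝ) : Prop :=
  (∀ R R', AcyclicOrd R → AcyclicOrd R' → 0 ≤ d R R') ∧
  (∀ R, AcyclicOrd R → d R R = 0) ∧
  (∀ R R', AcyclicOrd R → AcyclicOrd R' → d R R' = d R' R) ∧
  (∀ R R' R'', AcyclicOrd R → AcyclicOrd R' → AcyclicOrd R'' →
    d R R'' ≤ d R R' + d R' R'')

/-- Axiom 1. -/
def Axiom1 (d : (X → X → Prop) → (X → X → Prop) → ℝ) : Prop :=
  ∀ R R0 R' : X → X → Prop, AcyclicOrd R → AcyclicOrd R' →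
    InBetween R R' R0 → d R R' = d R R0 + d R0 R'

/-- Axiom 2. -/
def Axiom2 (d : (X → X → Prop) → (X → X → Prop) → ℝ) : Prop :=
  ∀ a b : X, a ≠ b → d (RabRel a b) (RabPlusRel a b) = 1

/-- Axiom 3. -/
def Axiom3 [Fintype X] (d : (X → X → Prop) → (X → X → Prop) → ℝ) : Prop :=
  (∀ (R : X → X → Prop) (a b : X), AcyclicOrd R → a ≠ b →
      ¬ asymPart R a b → ¬ asymPart R b a → AcyclicOrd (oplusR R a b) →
      d R (oplusR R a b) = (2 : ℝ) ^ (Nnum R b - 1) * d (RabRel a b) (RabPlusRel a b)) ∧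
  (∀ (R : X → X → Prop) (a b : X), AcyclicOrd R → asymPart R a b →
      d R (ominusR R a b) = (2 : ℝ) ^ (Nnum R b) * d (RabRel a b) (RabPlusRel a b))

/-- Axiom 4. -/
def Axiom4 (d : (X → X → Prop) → (X → X → Prop) → ℝ) : Prop :=
  ∀ R R' : X → X → Prop, AcyclicOrd R → AcyclicOrd R' →
    (∀ x y, asymPart R x y ↔ asymPart R' x y) → d R R' = 0

end PrefDefs


/-- A linear order: reflexive, transitive, antisymmetric and total. -/
def LinearOrderRel {X : Type*} (R : X → X → Prop) : Prop :=
  Reflexive R ∧ Transitive R ∧ AntiSymmetric R ∧ Total R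

/-
Only subsets with at least two elements contribute to `D`, since `M(S, R) = S` for the others.
Totality and antisymmetry allow at most one maximal element per set, so each of the `2 ^ n - n - 1`
contributing sets contributes at most `2`. For a linear order a maximal element always exists, and
reversing the order changes it in every contributing set, so an order and its reversal attain the
bound.
-/

section MaxSet

variable {X : Type*} {R R' : X → X → Prop} {S : Finset X}

instance asymPart.instIsStrictOrder [IsTrans X R] : IsStrictOrder X (asymPart R) where
  irrefl _ h := h.2 h.1
  trans _ _ _ hxy hyz := ⟨trans_of R hxy.1 hyz.1, fun hzx => hxy.2 (trans_of R hyz.1 hzx)⟩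

lemma eq_of_not_asymPart [Std.Antisymm R] [Std.Total R] {x y : X}
    (hxy : ¬ asymPart R x y) (hyx : ¬ asymPart R y x) : x = y := by
  have h_total : R x y ∨ R y x := total_of R x y
  have h_antisymm : R x y → R y x → x = y := antisymm_of R
  unfold asymPart at hxy hyx
  tauto

variable [DecidableEq X]

lemma mem_maxSet {x : X} : x ∈ MaxSet S R ↔ x ∈ S ∧ ∀ y ∈ S, ¬ asymPart R y x :=
  mem_filter

lemma maxSet_eq_self_of_subsingleton (hS : (S : Set X).Subsingleton) : MaxSet S R = S := by
  refine filter_true_of_mem fun x hx y hy hyx => ?_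
  obtain rfl : x = y := hS hx hy
  exact hyx.2 hyx.1

lemma card_maxSet_le_one [Std.Antisymm R] [Std.Total R] : #(MaxSet S R) ≤ 1 := by
  refine card_le_one.mpr fun x hx y hy => ?_
  rw [mem_maxSet] at hx hy
  exact eq_of_not_asymPart (hy.2 x hx.1) (hx.2 y hy.1)

lemma maxSet_nonempty [IsTrans X R] (hS : S.Nonempty) : (MaxSet S R).Nonempty := by
  have h_wf : (S : Set X).WellFoundedOn (asymPart R) := S.wellFoundedOn
  have : Nonempty S := hS.to_subtype
  obtain ⟨⟨m, hm⟩, -, h_min⟩ := h_wf.has_min Set.univ Set.univ_nonempty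
  exact ⟨m, mem_maxSet.mpr ⟨hm, fun y hy => h_min ⟨y, hy⟩ (Set.mem_univ _)⟩⟩

lemma card_maxSet [IsLinearOrder X R] (hS : S.Nonempty) : #(MaxSet S R) = 1 :=
  card_maxSet_le_one.antisymm (maxSet_nonempty hS).card_pos

lemma disjoint_maxSet_swap [Std.Antisymm R] [Std.Total R] (hS : S.Nontrivial) :
    Disjoint (MaxSet S R) (MaxSet S (Function.swap R)) := by
  refine disjoint_left.mpr fun x hx hx' => ?_
  rw [mem_maxSet] at hx hx'
  obtain ⟨y, hy, hyx⟩ := hS.exists_ne x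
  exact hyx (eq_of_not_asymPart (hx.2 y hy) (hx'.2 y hy))

lemma card_symmDiff_maxSet_le_two [Std.Antisymm R] [Std.Total R] [Std.Antisymm R']
    [Std.Total R'] : #(MaxSet S R ∆ MaxSet S R') ≤ 2 :=
  calc #(MaxSet S R ∆ MaxSet S R') ≤ #(MaxSet S R ∪ MaxSet S R') :=
        card_le_card symmDiff_subset_union
    _ ≤ #(MaxSet S R) + #(MaxSet S R') := card_union_le _ _
    _ ≤ 1 + 1 := add_le_add card_maxSet_le_one card_maxSet_le_one

lemma card_symmDiff_maxSet_swap [IsLinearOrder X R] (hS : S.Nontrivial) :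
    #(MaxSet S R ∆ MaxSet S (Function.swap R)) = 2 := by
  have h_disj := disjoint_maxSet_swap (R := R) hS
  have : IsLinearOrder X (Function.swap R) := { }
  rw [symmDiff_eq_union h_disj, card_union_of_disjoint h_disj, card_maxSet hS.nonempty,
    card_maxSet hS.nonempty]

end MaxSet

section Dtop

variable {X : Type*} [Fintype X]

lemma card_filter_nontrivial_add :
    #{S : Finset X | S.Nontrivial} + (Fintype.card X + 1) = 2 ^ Fintype.card X := by
  have h_compl : ({S : Finset X | ¬ S.Nontrivial} : Finset (Finset X)) =
      cons ∅ (univ.map ⟨singleton, singleton_injective⟩) (by simp) := by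
    ext S
    rcases S.eq_empty_or_nonempty with rfl | hS
    · simp
    · rcases hS.exists_eq_singleton_or_nontrivial with ⟨x, rfl⟩ | hS
      · simp
      · simp [Set.not_subsingleton_iff.mpr hS, hS.nonempty.ne_empty, hS.ne_singleton.symm]
  have h_card : #{S : Finset X | ¬ S.Nontrivial} = Fintype.card X + 1 := by
    rw [h_compl, card_cons, card_map, card_univ]
  rw [← h_card, card_filter_add_card_filter_not, card_univ, Fintype.card_finset]

variable [DecidableEq X] (R R' : X → X → Prop)

lemma dtop_eq_sum_nontrivial :
    Dtop R R' = ∑ S with S.Nontrivial, #(MaxSet S R ∆ MaxSet S R') := by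
  refine (sum_filter_of_ne fun S _ hne => ?_).symm
  contrapose! hne
  rw [maxSet_eq_self_of_subsingleton hne, maxSet_eq_self_of_subsingleton hne, symmDiff_self,
    bot_eq_empty, card_empty]

lemma dtop_le [Std.Antisymm R] [Std.Total R] [Std.Antisymm R'] [Std.Total R'] :
    Dtop R R' ≤ #{S : Finset X | S.Nontrivial} * 2 := by
  rw [dtop_eq_sum_nontrivial]
  exact sum_le_card_nsmul _ _ _ fun _ _ => card_symmDiff_maxSet_le_two

lemma dtop_swap [IsLinearOrder X R] :
    Dtop R (Function.swap R) = #{S : Finset X | S.Nontrivial} * 2 := by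
  rw [dtop_eq_sum_nontrivial]
  exact sum_const_nat fun S hS => card_symmDiff_maxSet_swap (mem_filter.mp hS).2

end Dtop

lemma linearOrderRel_iff_isLinearOrder {X : Type*} {R : X → X → Prop} :
    LinearOrderRel R ↔ IsLinearOrder X R where
  mp := fun ⟨h_refl, h_trans, h_antisymm, h_total⟩ =>
    { refl := h_refl, trans := h_trans, antisymm := h_antisymm, total := h_total }
  mpr _ := ⟨refl_of R, fun _ _ _ => trans_of R, fun _ _ => antisymm_of R, total_of R⟩

theorem stmt_13_general {X : Type*} [Fintype X] [DecidableEq X] :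
    (∀ R R' : X → X → Prop, [Std.Antisymm R] → [Std.Total R] → [Std.Antisymm R'] →
      [Std.Total R'] →
        (Dtop R R' : ℤ) ≤ 2 * (2 ^ Fintype.card X - (Fintype.card X : ℤ) - 1)) ∧
    (∀ R : X → X → Prop, [IsLinearOrder X R] →
        (Dtop R (Function.swap R) : ℤ) =
          2 * (2 ^ Fintype.card X - (Fintype.card X : ℤ) - 1)) := by
  have h_card : (#{S : Finset X | S.Nontrivial} : ℤ) + (Fintype.card X + 1) =
      2 ^ Fintype.card X := mod_cast card_filter_nontrivial_add
  refine ⟨fun R R' _ _ _ _ => ?_, fun R _ => ?_⟩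
  · have h_le := dtop_le R R'
    lia
  · have h_eq := dtop_swap R
    lia

/-- the `D`-diameter of the set of linear orders on an `n`-element set
(`n ≥ 2`) equals `2(2^n − n − 1)`. -/
theorem stmt_13 {X : Type*} [Fintype X] [DecidableEq X] (hn : 2 ≤ Fintype.card X) :
    (∀ R R' : X → X → Prop, LinearOrderRel R → LinearOrderRel R' →
        (Dtop R R' : ℤ) ≤ 2 * (2 ^ Fintype.card X - (Fintype.card X : ℤ) - 1)) ∧
    (∃ R R' : X → X → Prop, LinearOrderRel R ∧ LinearOrderRel R' ∧
        (Dtop R R' : ℤ) = 2 * (2 ^ Fintype.card X - (Fintype.card X : ℤ) - 1)) := by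
  simp only [linearOrderRel_iff_isLinearOrder]
  obtain ⟨_, -⟩ := exists_wellFoundedLT X
  exact ⟨fun R R' _ _ => stmt_13_general.1 R R',
    (· ≤ ·), (· ≥ ·), inferInstance, inferInstance, stmt_13_general.2 _⟩
end

section
/- Let X be a finite set, ≿ an antisymmetric acyclic order on X that is not transitive (so that tran(≿) ≠ ≿), and ⊵ a transitive extension of ≿. Then the transitive closure tran(≿) is in-between ≿ and ⊵. -/
open Classical Finset symmDiff

/-- `Q` is a transitive extension of the acyclic order `R`. -/
def TransExt {X : Type*} (R Q : X → X → Prop) : Prop :=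
  Reflexive Q ∧ Transitive Q ∧ ∀ x y, asymPart R x y → asymPart Q x y

/-!
If `≿` is antisymmetric, then every pair `x ≿ y` with `x ≠ y` is strict in `≿`, hence in `⊵`. Since
`⊳` is transitive, `tran(≿)`, and so every relation between `≿` and `tran(≿)`, is contained in the
reflexive closure of `⊳`. Containment there makes such a relation acyclic, and also incomparable on
each pair of `tran(≿)` that it misses. Hence the missing pairs can be added to `≿` one at a time, in
any order, and each addition is a step `⊕` toward `⊵`.
-/

section TransitiveExtensionSteps

open Relation

variable {X : Type*} {r R S T Q P : X → X → Prop} {a b : X} {F : Finset (X × X)}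

instance asymPart.isTrans [IsTrans X Q] : IsTrans X (asymPart Q) where
  trans _ _ _ hxy hyz :=
    ⟨trans_of Q hxy.1 hyz.1, fun hzx ↦ hxy.2 (trans_of Q hyz.1 hzx)⟩

instance asymPart.irrefl : Std.Irrefl (asymPart Q) where
  irrefl _ h := h.2 h.1

lemma asymPart_le_of_le_reflGen (hS : S ≤ ReflGen r) : asymPart S ≤ r := by
  intro x y hxy
  cases hS x y hxy.1 with
  | refl => exact (hxy.2 hxy.1).elim
  | single h => exact h

lemma le_reflGen_asymPart [Std.Antisymm R] : R ≤ ReflGen (asymPart R) := by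
  intro x y hxy
  by_cases hyx : R y x
  · exact antisymm hxy hyx ▸ .refl
  · exact .single ⟨hxy, hyx⟩

lemma transGen_le_reflGen_asymPart [Std.Antisymm R] [IsTrans X Q]
    (h : asymPart R ≤ asymPart Q) : TransGen R ≤ ReflGen (asymPart Q) :=
  transGen_minimal (le_reflGen_asymPart.trans (ReflGen.mono h))

lemma lt_transGen_of_not_isTrans (hR : ¬ IsTrans X R) : R < TransGen R := by
  have hle : R ≤ TransGen R := fun _ _ ↦ .single
  refine hle.lt_of_ne fun heq ↦ hR ?_
  rw [heq]
  infer_instance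

lemma acyclicRel_of_asymPart_le [IsTrans X r] [Std.Irrefl r] (h : asymPart S ≤ r) :
    AcyclicRel S := by
  rintro ⟨k, z, -, hz⟩
  have : IsTrans (Fin (k + 1)) (z ⁻¹'o r) := ⟨fun _ _ _ ↦ trans_of r⟩
  have : Std.Irrefl (z ⁻¹'o r) := ⟨fun i ↦ irrefl_of r (z i)⟩
  obtain ⟨m, -, hm⟩ :=
    (Finite.wellFounded_of_trans_of_irrefl (z ⁻¹'o r)).has_min Set.univ Set.univ_nonempty
  have hpred : asymPart S (z (m - 1)) (z m) := by simpa only [sub_add_cancel] using hz (m - 1)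
  exact hm (m - 1) trivial (h _ _ hpred)

lemma OneStep.inBetween (h : OneStep R S Q) : InBetween R Q S :=
  ⟨0, fun _ ↦ S, h, fun i ↦ i.elim0, rfl⟩

lemma InBetween.snoc (h : InBetween R Q S) (hstep : OneStep S P Q) : InBetween R Q P := by
  obtain ⟨n, c, hfirst, hsteps, rfl⟩ := h
  refine ⟨n + 1, Fin.snoc (α := fun _ ↦ X → X → Prop) c P, ?_, fun i ↦ ?_, Fin.snoc_last ..⟩
  · rw [← Fin.castSucc_zero, Fin.snoc_castSucc]
    exact hfirst
  · cases i using Fin.lastCases with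
    | last =>
      rw [Fin.succ_last, Fin.snoc_castSucc, Fin.snoc_last]
      exact hstep
    | cast j =>
      rw [Fin.succ_castSucc, Fin.snoc_castSucc, Fin.snoc_castSucc]
      exact hsteps j

/-- The relation `S ∪ F` obtained from `S` by adding the finitely many pairs in `F`; these are the
relations visited on the way from `≿` to its transitive closure. -/
def addPairs (S : X → X → Prop) (F : Finset (X × X)) : X → X → Prop :=
  fun x y ↦ S x y ∨ (x, y) ∈ F

lemma addPairs_cons {p : X × X} (hp : p ∉ F) :
    addPairs S (F.cons p hp) = addPairs (addPairs S F) {p} := by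
  funext x y
  simp only [addPairs, Finset.mem_cons, Finset.mem_singleton, or_assoc, or_comm (a := (x, y) = p)]

lemma oplusR_eq_addPairs (h : ¬ S b a) : oplusR S a b = addPairs S {(a, b)} := by
  funext x y
  simp only [oplusR, addPairs, h, false_and, not_false_eq_true, and_true, true_and,
    Finset.mem_singleton, Prod.mk.injEq]

instance addPairs.refl [Std.Refl S] : Std.Refl (addPairs S F) where
  refl x := .inl (refl_of S x)

lemma addPairs_le_reflGen (hS : S ≤ ReflGen r) (hF : ∀ p ∈ F, r p.1 p.2) :
    addPairs S F ≤ ReflGen r :=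
  fun _ _ h ↦ h.elim (hS _ _) fun hmem ↦ .single (hF _ hmem)

lemma oneStep_addPairs_singleton [Std.Refl S] [IsTrans X Q] {p : X × X}
    (hS : S ≤ ReflGen (asymPart Q)) (hpQ : asymPart Q p.1 p.2) (hpS : ¬ S p.1 p.2) :
    OneStep S (addPairs S {p}) Q := by
  obtain ⟨a, b⟩ := p
  have hba : ¬ S b a := fun h ↦ by
    cases hS b a h with
    | refl => exact hpS h
    | single hlt => exact hlt.2 hpQ.1
  have hle : addPairs S {(a, b)} ≤ ReflGen (asymPart Q) :=
    addPairs_le_reflGen hS (by simpa only [Finset.mem_singleton, forall_eq] using hpQ)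
  exact ⟨⟨refl_of _, acyclicRel_of_asymPart_le (asymPart_le_of_le_reflGen hle)⟩,
    .inr ⟨a, b, fun h ↦ hpS h.1, fun h ↦ hba h.1, hpQ, (oplusR_eq_addPairs hba).symm⟩⟩

lemma inBetween_addPairs [Std.Refl S] [IsTrans X Q] (hS : S ≤ ReflGen (asymPart Q))
    (hF : F.Nonempty) (hFQ : ∀ p ∈ F, asymPart Q p.1 p.2) (hFS : ∀ p ∈ F, ¬ S p.1 p.2) :
    InBetween S Q (addPairs S F) := by
  induction hF using Finset.Nonempty.cons_induction with
  | singleton p =>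
    simp only [Finset.mem_singleton, forall_eq] at hFQ hFS
    exact (oneStep_addPairs_singleton hS hFQ hFS).inBetween
  | cons p F hpF _ ih =>
    rw [Finset.forall_mem_cons] at hFQ hFS
    rw [addPairs_cons]
    exact (ih hFQ.2 hFS.2).snoc <| oneStep_addPairs_singleton (addPairs_le_reflGen hS hFQ.2)
      hFQ.1 (not_or_intro hFS.1 hpF)

theorem inBetween_of_lt [Std.Refl S] [IsTrans X Q] (hST : S < T)
    (hT : T ≤ ReflGen (asymPart Q)) (hfin : {p : X × X | T p.1 p.2 ∧ ¬ S p.1 p.2}.Finite) :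
    InBetween S Q T := by
  have hgap {p : X × X} : p ∈ hfin.toFinset ↔ T p.1 p.2 ∧ ¬ S p.1 p.2 := hfin.mem_toFinset
  obtain ⟨a, b, hTab, hSab⟩ : ∃ a b, T a b ∧ ¬ S a b := by
    by_contra! hTS
    exact hST.not_ge hTS
  have hne : hfin.toFinset.Nonempty := ⟨(a, b), hgap.2 ⟨hTab, hSab⟩⟩
  have hT_eq : addPairs S hfin.toFinset = T := by
    funext x y
    have := hST.le x y
    simp only [addPairs, hgap, eq_iff_iff]
    tauto
  have hgapQ : ∀ p ∈ hfin.toFinset, asymPart Q p.1 p.2 := by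
    rintro ⟨x, y⟩ hp
    obtain ⟨hTxy, hSxy⟩ := hgap.1 hp
    cases hT x y hTxy with
    | refl => exact (hSxy (refl_of S x)).elim
    | single h => exact h
  rw [← hT_eq]
  exact inBetween_addPairs (hST.le.trans hT) hne hgapQ fun p hp ↦ (hgap.1 hp).2

end TransitiveExtensionSteps

theorem stmt_18_general {X : Type*} {R Q : X → X → Prop} [Std.Refl R] [Std.Antisymm R]
    (hnt : ¬ IsTrans X R) (hQ : TransExt R Q)
    (hfin : {p : X × X | Relation.TransGen R p.1 p.2 ∧ ¬ R p.1 p.2}.Finite) :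
    InBetween R Q (Relation.TransGen R) :=
  have : IsTrans X Q := ⟨hQ.2.1⟩
  inBetween_of_lt (lt_transGen_of_not_isTrans hnt) (transGen_le_reflGen_asymPart hQ.2.2) hfin

/-- Lemma 5.3: if `≿` is a non-transitive antisymmetric acyclic order
on a finite set and `⊵` is a transitive extension of `≿`, then `tran(≿)` is
in-between `≿` and `⊵`. -/
theorem stmt_18 {X : Type*} [Fintype X]
    (R : X → X → Prop) (hR : AcyclicOrd R) (hanti : AntiSymmetric R)
    (hnt : ¬ Transitive R)
    (Q : X → X → Prop) (hQ : TransExt R Q) :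
    InBetween R Q (fun x y => Relation.TransGen R x y) :=
  @stmt_18_general X R Q ⟨hR.1⟩ ⟨hanti⟩ (fun h ↦ hnt h.trans) hQ (Set.toFinite _)
end

section
/- Let X be a finite set with |X| ≥ 3 and let μ be a positive measure on 2^X with μ({x}) > 0 for every x ∈ X. Then the metric space (P*(X), D^μ) of partial orders on X cannot be isometrically embedded in any strictly convex real normed linear space: for every strictly convex real normed linear space E, there is no map φ : P*(X) → E satisfying ‖φ(≿) − φ(⊵)‖ = D^μ(≿,⊵) for all partial orders ≿, ⊵ on X. -/
open Classical Finset symmDiff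

/-!
Fix an element `c` of positive weight and elements `a ≠ b` other than `c`. The order with `a ≻ c`
only and the order with `b ≻ c` only both lie metrically between the discrete order and the order
with `a ≻ c` and `b ≻ c`, because `D^μ` is additive along chains of increasing strict parts. Both
are at distance `2 ^ (|X| - 2) * μ {c}` from the discrete order. In a strictly convex space the
points metrically between two given ones form a segment, on which the distance to an endpoint
determines the point; so the images of the two orders would coincide, although `D^μ` separates them.
-/

section StrictConvex

variable {V P : Type*} [NormedAddCommGroup V] [NormedSpace ℝ V] [MetricSpace P]
  [NormedAddTorsor V P]

lemma eq_of_wbtw_of_wbtw_of_dist_eq {x y y' z : P} (h : Wbtw ℝ x y z) (h' : Wbtw ℝ x y' z)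
    (hd : dist x y = dist x y') : y = y' := by
  obtain ⟨t, ⟨ht, -⟩, rfl⟩ := h
  obtain ⟨t', ⟨ht', -⟩, rfl⟩ := h'
  rw [dist_left_lineMap, dist_left_lineMap, Real.norm_of_nonneg ht, Real.norm_of_nonneg ht',
    mul_eq_mul_right_iff, dist_eq_zero] at hd
  obtain rfl | rfl := hd
  · rfl
  · simp only [AffineMap.lineMap_same, AffineMap.const_apply]

lemma eq_of_dist_add_dist_eq_of_dist_eq [StrictConvexSpace ℝ V] {x y y' z : P}
    (h : dist x y + dist y z = dist x z) (h' : dist x y' + dist y' z = dist x z)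
    (hd : dist x y = dist x y') : y = y' :=
  eq_of_wbtw_of_wbtw_of_dist_eq (dist_add_dist_eq_iff.1 h) (dist_add_dist_eq_iff.1 h') hd

end StrictConvex

section TopDifference

variable {X : Type*} [DecidableEq X]

lemma MaxSet_subset_of_asymPart_le {R R' : X → X → Prop} (h : asymPart R ≤ asymPart R')
    (S : Finset X) : MaxSet S R' ⊆ MaxSet S R :=
  Finset.monotone_filter_right S fun x _ hx y hy hyx => hx y hy (h y x hyx)

variable [Fintype X]

lemma Dmu_eq_sum_sub_of_asymPart_le (w : X → ℝ) {R R' : X → X → Prop}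
    (h : asymPart R ≤ asymPart R') :
    Dmu w R R' = ∑ S : Finset X, (∑ x ∈ MaxSet S R, w x - ∑ x ∈ MaxSet S R', w x) := by
  refine Finset.sum_congr rfl fun S _ => ?_
  have hS := MaxSet_subset_of_asymPart_le h S
  rw [symmDiff_of_ge hS, Finset.sum_sdiff_eq_sub hS]

lemma Dmu_add_Dmu_of_asymPart_le (w : X → ℝ) {R R' R'' : X → X → Prop}
    (h : asymPart R ≤ asymPart R') (h' : asymPart R' ≤ asymPart R'') :
    Dmu w R R' + Dmu w R' R'' = Dmu w R R'' := by
  rw [Dmu_eq_sum_sub_of_asymPart_le w h, Dmu_eq_sum_sub_of_asymPart_le w h',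
    Dmu_eq_sum_sub_of_asymPart_le w (h.trans h'), ← Finset.sum_add_distrib]
  simp only [sub_add_sub_cancel]

lemma Dmu_eq_sum_card_mul (w : X → ℝ) (R R' : X → X → Prop) :
    Dmu w R R' = ∑ x, #{S : Finset X | x ∈ MaxSet S R ∆ MaxSet S R'} * w x := by
  unfold Dmu
  rw [Finset.sum_comm' (t' := univ)
    (s' := fun x => {S : Finset X | x ∈ MaxSet S R ∆ MaxSet S R'}) (by simp)]
  simp only [Finset.sum_const, nsmul_eq_mul]

end TopDifference

section Fan

variable {X : Type*}

/-- The partial order on `X` whose strict comparisons are exactly `x ≻ c` for `x ∈ A \ {c}`.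
For fixed `c`, only the maximality of `c` depends on `A`, so `D^μ` between two such orders counts
the sets `S` in which they disagree about `c`. Allowing `c ∈ A` does no harm and saves a side
condition. -/
def fanRel (c : X) (A : Set X) : X → X → Prop :=
  fun x y => x = y ∨ (x ∈ A ∧ y = c)

lemma fanRel_reflexive_transitive_antiSymmetric (c : X) (A : Set X) :
    Reflexive (fanRel c A) ∧ Transitive (fanRel c A) ∧ AntiSymmetric (fanRel c A) := by
  refine ⟨fun x => Or.inl rfl, ?_, ?_⟩
  · rintro x y z (rfl | ⟨hx, rfl⟩) (rfl | ⟨hy, rfl⟩)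
    exacts [Or.inl rfl, Or.inr ⟨hy, rfl⟩, Or.inr ⟨hx, rfl⟩, Or.inr ⟨hx, rfl⟩]
  · rintro x y (rfl | ⟨-, rfl⟩) (hyx | ⟨-, hx⟩)
    exacts [rfl, rfl, hyx.symm, hx]

lemma asymPart_fanRel {c : X} {A : Set X} {x y : X} :
    asymPart (fanRel c A) x y ↔ x ∈ A \ {c} ∧ y = c := by
  grind [asymPart, fanRel]

lemma asymPart_fanRel_mono (c : X) : Monotone fun A : Set X => asymPart (fanRel c A) := by
  intro A B hAB x y
  simp only [asymPart_fanRel]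
  exact And.imp_left fun hx => Set.sdiff_subset_sdiff_left hAB hx

variable [DecidableEq X]

lemma self_mem_MaxSet_fanRel {c : X} {A : Set X} {S : Finset X} :
    c ∈ MaxSet S (fanRel c A) ↔ c ∈ S ∧ Disjoint (S : Set X) (A \ {c}) := by
  simp only [MaxSet, Finset.mem_filter, asymPart_fanRel, and_true, Set.disjoint_left,
    Finset.mem_coe]

lemma mem_MaxSet_fanRel_of_ne {c x : X} (hx : x ≠ c) {A : Set X} {S : Finset X} :
    x ∈ MaxSet S (fanRel c A) ↔ x ∈ S := by
  simp only [MaxSet, Finset.mem_filter, asymPart_fanRel, hx, and_false, not_false_eq_true,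
    implies_true, and_true]

variable [Fintype X]

lemma Dmu_fanRel (w : X → ℝ) (c : X) (A B : Set X) :
    Dmu w (fanRel c A) (fanRel c B) =
      #{S : Finset X | c ∈ MaxSet S (fanRel c A) ∆ MaxSet S (fanRel c B)} * w c := by
  rw [Dmu_eq_sum_card_mul]
  refine Fintype.sum_eq_single c fun x hx => ?_
  simp only [Finset.mem_symmDiff, mem_MaxSet_fanRel_of_ne hx, and_not_self, or_self,
    Finset.filter_false, Finset.card_empty, Nat.cast_zero, zero_mul]

lemma Dmu_fanRel_add_Dmu_fanRel (w : X → ℝ) (c : X) {A B C : Set X} (hAB : A ⊆ B) (hBC : B ⊆ C) :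
    Dmu w (fanRel c A) (fanRel c B) + Dmu w (fanRel c B) (fanRel c C) =
      Dmu w (fanRel c A) (fanRel c C) :=
  Dmu_add_Dmu_of_asymPart_le w (asymPart_fanRel_mono c hAB) (asymPart_fanRel_mono c hBC)

lemma Dmu_fanRel_empty_singleton (w : X → ℝ) {a c : X} (hac : a ≠ c) :
    Dmu w (fanRel c ∅) (fanRel c {a}) = 2 ^ (Fintype.card X - 2) * w c := by
  have filter_eq_Icc : ({S : Finset X | c ∈ MaxSet S (fanRel c ∅) ∆ MaxSet S (fanRel c {a})} :
      Finset (Finset X)) = Finset.Icc {a, c} univ := by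
    ext S
    have mem_empty : c ∈ MaxSet S (fanRel c ∅) ↔ c ∈ S := by
      simp [self_mem_MaxSet_fanRel]
    have mem_singleton : c ∈ MaxSet S (fanRel c {a}) ↔ c ∈ S ∧ a ∉ S := by
      rw [self_mem_MaxSet_fanRel, Set.sdiff_singleton_eq_self (Set.notMem_singleton_iff.2 hac.symm),
        Set.disjoint_singleton_right, Finset.mem_coe]
    simp only [Finset.mem_filter_univ, Finset.mem_symmDiff, mem_empty, mem_singleton,
      Finset.mem_Icc, Finset.insert_subset_iff, Finset.singleton_subset_iff, Finset.subset_univ]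
    tauto
  rw [Dmu_fanRel, filter_eq_Icc, Finset.card_Icc_finset (Finset.subset_univ _),
    Finset.card_pair hac, Finset.card_univ, Nat.cast_pow, Nat.cast_ofNat]

lemma Dmu_fanRel_pos {w : X → ℝ} {c a : X} (hw : 0 < w c) {A B : Set X} (haA : a ∈ A)
    (haB : a ∉ B) (hac : a ≠ c) : 0 < Dmu w (fanRel c A) (fanRel c B) := by
  have pair_mem : {a, c} ∈
      ({S : Finset X | c ∈ MaxSet S (fanRel c A) ∆ MaxSet S (fanRel c B)} : Finset _) := by
    simp [Finset.mem_symmDiff, self_mem_MaxSet_fanRel, haA, haB, hac]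
  rw [Dmu_fanRel]
  exact mul_pos (Nat.cast_pos.2 (Finset.card_pos.2 ⟨_, pair_mem⟩)) hw

end Fan

/-- In the pointwise order, `0 < w` means that `w` is nonnegative and positive at some point. -/
theorem stmt_19_general {X : Type*} [Fintype X] [DecidableEq X]
    (h3 : 3 ≤ Fintype.card X) {w : X → ℝ} (hw : 0 < w)
    (E : Type*) [NormedAddCommGroup E] [NormedSpace ℝ E] [StrictConvexSpace ℝ E] :
    ¬ ∃ φ : (X → X → Prop) → E,
        ∀ R R' : X → X → Prop,
          (Reflexive R ∧ Transitive R ∧ AntiSymmetric R) →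
          (Reflexive R' ∧ Transitive R' ∧ AntiSymmetric R') →
          ‖φ R - φ R'‖ = Dmu w R R' := by
  rintro ⟨φ, hφ⟩
  obtain ⟨-, c, hc⟩ := Pi.lt_def.1 hw
  obtain ⟨a, ha, b, hb, hab⟩ : ∃ a ∈ univ.erase c, ∃ b ∈ univ.erase c, a ≠ b :=
    Finset.one_lt_card.1 (by rw [Finset.card_erase_of_mem (mem_univ c), Finset.card_univ]; omega)
  replace ha := Finset.ne_of_mem_erase ha
  replace hb := Finset.ne_of_mem_erase hb
  have dist_fan (A B : Set X) :
      dist (φ (fanRel c A)) (φ (fanRel c B)) = Dmu w (fanRel c A) (fanRel c B) := by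
    rw [dist_eq_norm]
    exact hφ _ _ (fanRel_reflexive_transitive_antiSymmetric c A)
      (fanRel_reflexive_transitive_antiSymmetric c B)
  have singletons_eq : φ (fanRel c {a}) = φ (fanRel c {b}) := by
    apply eq_of_dist_add_dist_eq_of_dist_eq (x := φ (fanRel c ∅)) (z := φ (fanRel c {a, b}))
    · simpa only [dist_fan] using Dmu_fanRel_add_Dmu_fanRel w c (by simp) (by simp)
    · simpa only [dist_fan] using Dmu_fanRel_add_Dmu_fanRel w c (by simp) (by simp)
    · rw [dist_fan, dist_fan, Dmu_fanRel_empty_singleton w ha, Dmu_fanRel_empty_singleton w hb]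
  refine (Dmu_fanRel_pos hc (Set.mem_singleton a) (Set.notMem_singleton_iff.2 hab) ha).ne' ?_
  rw [← dist_fan, singletons_eq, dist_self]

/-- Proposition 6.1: for `|X| ≥ 3` and a measure with strictly positive
weights, the metric space of partial orders on `X` with the metric `D^μ` cannot be
isometrically embedded in any strictly convex real normed linear space. -/
theorem stmt_19 {X : Type*} [Fintype X] [DecidableEq X]
    (h3 : 3 ≤ Fintype.card X)
    (w : X → ℝ) (hw : ∀ x, 0 < w x)
    (E : Type*) [NormedAddCommGroup E] [NormedSpace ℝ E] [StrictConvexSpace ℝ E] :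
    ¬ ∃ φ : (X → X → Prop) → E,
        ∀ R R' : X → X → Prop,
          (Reflexive R ∧ Transitive R ∧ AntiSymmetric R) →
          (Reflexive R' ∧ Transitive R' ∧ AntiSymmetric R') →
          ‖φ R - φ R'‖ = Dmu w R R' := by
  have : Nonempty X := Fintype.card_pos_iff.1 (by omega)
  exact stmt_19_general h3 (lt_of_strongLT hw) E
end
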